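/- arXiv:2501.14716 — 7 statements merged into one kernel-verified Lean document; each statement's English description precedes it below -/
import Mathlib

section
/- Let h ≥ 1 be an integer and set n = 2h+1. For all integers m and ℓ with m ≥ 2h and 0 ≤ ℓ ≤ m−2h, one has C^{m−2h+1}_ℓ(2h+1) · binom(m+1, m+1−2h) − C^{m−2h}_ℓ(2h+1) · binom(m, m−2h) = binom(m, 2h−1) · T^{m−2h+1}_ℓ(2h+1). -/
/-- Pochhammer (ascending factorial) symbol `(a)_m = a(a+1)⋯(a+m−1)` over `ℚ`. -/
noncomputable def poch (a : ℚ) (m : ℕ) : ℚ := Polynomial.eval a (ascPochhammer ℚ m)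

/-- Clifford–Appell coefficient `C_ℓ^k(n)` with `n = 2h+1`:
`binom(k,ℓ)·((n+1)/2)_{k−ℓ}·((n−1)/2)_ℓ/(n)_k`. -/
noncomputable def Ccoef (h k l : ℕ) : ℚ :=
  (k.choose l : ℚ) * poch ((h : ℚ) + 1) (k - l) * poch (h : ℚ) l / poch (2 * (h : ℚ) + 1) k

/-- Harmonic coefficient `T_ℓ^k(n)` with `n = 2h+1`:
`binom(k,ℓ)·((n−1)/2)_{k−ℓ}·((n−1)/2)_ℓ/(n−1)_k`. -/
noncomputable def Tcoef (h k l : ℕ) : ℚ :=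
  (k.choose l : ℚ) * poch (h : ℚ) (k - l) * poch (h : ℚ) l / poch (2 * (h : ℚ)) k

/-!
Every `(a)_j` is `j!` times `multichoose a j`. Multiplying a coefficient
`binom(k,ℓ)·(a)_{k−ℓ}·(b)_ℓ/(c)_k` by `multichoose c k` therefore cancels its denominator and all
factorials, leaving `multichoose a (k−ℓ) · multichoose b ℓ`. The binomials in the theorem are
exactly these normalizing factors, and what remains is the common factor `multichoose b ℓ` times
Pascal's rule `multichoose (a+1) (j+1) = multichoose a (j+1) + multichoose (a+1) j`.
-/

section BinomialRing

variable {R : Type*}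

theorem ascPochhammer_eval_eq_factorial_mul_multichoose [Semiring R] [BinomialRing R]
    (r : R) (n : ℕ) : (ascPochhammer R n).eval r = n.factorial * Ring.multichoose r n := by
  rw [← Polynomial.ascPochhammer_smeval_eq_eval,
    ← Ring.factorial_nsmul_multichoose_eq_ascPochhammer, nsmul_eq_mul]

theorem natCast_add_choose_eq_multichoose [Ring R] [BinomialRing R] (n k : ℕ) :
    ((n + k).choose k : R) = Ring.multichoose (n + 1 : R) k := by
  rw [Ring.multichoose_eq, ← Ring.choose_natCast]
  congr 1
  push_cast
  abel

theorem natCast_add_choose_pred_eq_multichoose [Ring R] [BinomialRing R] {n : ℕ} (hn : 1 ≤ n)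
    (k : ℕ) : ((n + k).choose (n - 1) : R) = Ring.multichoose (n : R) (k + 1) := by
  obtain ⟨p, rfl⟩ := Nat.exists_eq_add_of_le' hn
  rw [Nat.add_sub_cancel, Nat.add_right_comm, add_assoc, Nat.choose_symm_add,
    natCast_add_choose_eq_multichoose, Nat.cast_add_one]

end BinomialRing

theorem ascPochhammer_eval_ne_zero {R : Type*} [Ring R] [IsDomain R] {r : R} {n : ℕ}
    (hr : ∀ i < n, r + (i : R) ≠ 0) : (ascPochhammer R n).eval r ≠ 0 := by
  rw [Ne, ascPochhammer_eval_eq_zero_iff]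
  rintro ⟨i, hi, hir⟩
  exact hr i hi (by rw [hir, add_neg_cancel])

section Field

variable {K : Type*} [Field K]

/-- The common shape `binom(k,ℓ)·(a)_{k−ℓ}·(b)_ℓ/(c)_k` of the Clifford–Appell coefficients
(`a = (n+1)/2`, `b = (n−1)/2`, `c = n`) and the harmonic ones (`a = b = (n−1)/2`, `c = n−1`), with
independent parameters `a`, `b`, `c`. It vanishes for `k < ℓ`. -/
noncomputable def pochhammerCoeff (a b c : K) (k l : ℕ) : K :=
  (k.choose l : K) * (ascPochhammer K (k - l)).eval a * (ascPochhammer K l).eval b /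
    (ascPochhammer K k).eval c

theorem pochhammerCoeff_eq_zero_of_lt (a b c : K) {k l : ℕ} (hkl : k < l) :
    pochhammerCoeff a b c k l = 0 := by
  simp [pochhammerCoeff, Nat.choose_eq_zero_of_lt hkl]

variable [CharZero K]

theorem pochhammerCoeff_mul_multichoose (a b : K) {c : K} {k l : ℕ}
    (hc : (ascPochhammer K k).eval c ≠ 0) (hlk : l ≤ k) :
    pochhammerCoeff a b c k l * Ring.multichoose c k =
      Ring.multichoose a (k - l) * Ring.multichoose b l := by
  have factorial_ne_zero (n : ℕ) : (n.factorial : K) ≠ 0 := Nat.cast_ne_zero.2 n.factorial_ne_zero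
  have hk := factorial_ne_zero k
  have hl := factorial_ne_zero l
  have hkl := factorial_ne_zero (k - l)
  rw [ascPochhammer_eval_eq_factorial_mul_multichoose] at hc
  have hmc : Ring.multichoose c k ≠ 0 := right_ne_zero_of_mul hc
  rw [pochhammerCoeff, Nat.cast_choose K hlk]
  simp only [ascPochhammer_eval_eq_factorial_mul_multichoose]
  field_simp

theorem statement1_general (a b c : K) (k l : ℕ) (hc : ∀ i < k + 2, c + (i : K) ≠ 0) :
    pochhammerCoeff (a + 1) b (c + 1) (k + 1) l * Ring.multichoose (c + 1) (k + 1)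
      - pochhammerCoeff (a + 1) b (c + 1) k l * Ring.multichoose (c + 1) k
      = Ring.multichoose c (k + 1) * pochhammerCoeff a b c (k + 1) l := by
  have hc_shift (i : ℕ) (hi : i < k + 1) : c + 1 + (i : K) ≠ 0 := by
    simpa [add_assoc, add_comm, add_left_comm] using hc (i + 1) (by omega)
  have hpoch : (ascPochhammer K (k + 1)).eval c ≠ 0 :=
    ascPochhammer_eval_ne_zero fun i hi => hc i (by omega)
  have hpoch_shift_succ : (ascPochhammer K (k + 1)).eval (c + 1) ≠ 0 :=
    ascPochhammer_eval_ne_zero hc_shift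
  have hpoch_shift : (ascPochhammer K k).eval (c + 1) ≠ 0 :=
    ascPochhammer_eval_ne_zero fun i hi => hc_shift i (by omega)
  rw [mul_comm (Ring.multichoose c (k + 1))]
  rcases lt_trichotomy l (k + 1) with hl | rfl | hl
  · have hlk : l ≤ k := Nat.lt_succ_iff.1 hl
    rw [pochhammerCoeff_mul_multichoose _ _ hpoch_shift_succ hl.le,
      pochhammerCoeff_mul_multichoose _ _ hpoch_shift hlk,
      pochhammerCoeff_mul_multichoose _ _ hpoch hl.le, Nat.succ_sub hlk, Ring.multichoose_succ_succ]
    ring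
  · rw [pochhammerCoeff_mul_multichoose _ _ hpoch_shift_succ le_rfl,
      pochhammerCoeff_mul_multichoose _ _ hpoch le_rfl,
      pochhammerCoeff_eq_zero_of_lt _ _ _ k.lt_succ_self, Nat.sub_self,
      Ring.multichoose_zero_right, Ring.multichoose_zero_right, zero_mul, sub_zero]
  · simp only [pochhammerCoeff_eq_zero_of_lt _ _ _ hl,
      pochhammerCoeff_eq_zero_of_lt _ _ _ (k.lt_succ_self.trans hl), zero_mul, sub_zero]

end Field

theorem Ccoef_eq_pochhammerCoeff (h k l : ℕ) :
    Ccoef h k l = pochhammerCoeff (h + 1 : ℚ) h (2 * h + 1) k l :=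
  rfl

theorem Tcoef_eq_pochhammerCoeff (h k l : ℕ) :
    Tcoef h k l = pochhammerCoeff (h : ℚ) h (2 * h) k l :=
  rfl

/-- For `h ≥ 1`, `n = 2h+1`, `m ≥ 2h` and `0 ≤ ℓ ≤ m−2h`:
`C^{m−2h+1}_ℓ(2h+1)·binom(m+1, m+1−2h) − C^{m−2h}_ℓ(2h+1)·binom(m, m−2h)
  = binom(m, 2h−1)·T^{m−2h+1}_ℓ(2h+1)`. -/
theorem statement1 (h m l : ℕ) (hh : 1 ≤ h) (hm : 2 * h ≤ m) (hl : l ≤ m - 2 * h) :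
    Ccoef h (m + 1 - 2 * h) l * ((m + 1).choose (m + 1 - 2 * h) : ℚ)
      - Ccoef h (m - 2 * h) l * (m.choose (m - 2 * h) : ℚ)
      = (m.choose (2 * h - 1) : ℚ) * Tcoef h (m + 1 - 2 * h) l := by
  obtain ⟨k, rfl⟩ := Nat.exists_eq_add_of_le hm
  have hsub_succ : 2 * h + k + 1 - 2 * h = k + 1 := by omega
  have hchoose_succ :
      ((2 * h + k + 1).choose (k + 1) : ℚ) = Ring.multichoose (2 * h + 1 : ℚ) (k + 1) := by
    exact_mod_cast natCast_add_choose_eq_multichoose (R := ℚ) (2 * h) (k + 1)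
  have hchoose : ((2 * h + k).choose k : ℚ) = Ring.multichoose (2 * h + 1 : ℚ) k := by
    exact_mod_cast natCast_add_choose_eq_multichoose (R := ℚ) (2 * h) k
  have hchoose_pred :
      ((2 * h + k).choose (2 * h - 1) : ℚ) = Ring.multichoose (2 * h : ℚ) (k + 1) := by
    exact_mod_cast natCast_add_choose_pred_eq_multichoose (R := ℚ) (by omega : 1 ≤ 2 * h) k
  rw [hsub_succ, Nat.add_sub_cancel_left, hchoose_succ, hchoose, hchoose_pred,
    Ccoef_eq_pochhammerCoeff, Ccoef_eq_pochhammerCoeff, Tcoef_eq_pochhammerCoeff]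
  exact statement1_general (h : ℚ) h (2 * h) k l fun i _ => by positivity
end

section
/- Let A be an associative unital real algebra, let h ≥ 1 be an integer, and let a, b ∈ A be commuting elements (a·b = b·a). Define the Clifford–Appell elements P_k := Σ_{j=0}^{k} C_j^k(2h+1) · a^{k−j} · b^j and the harmonic elements H_k := Σ_{j=0}^{k} T_j^k(2h+1) · a^{k−j} · b^j. Then for every integer ℓ ≥ 0: binom(ℓ+1+2h, ℓ+1) · P_{ℓ+1} − binom(ℓ+2h, ℓ) · a · P_ℓ = binom(ℓ+2h, 2h−1) · H_{ℓ+1}. -/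
/-- Clifford–Appell element `P_k = Σ_{j=0}^{k} C_j^k(2h+1) • a^{k−j} b^j` of a real algebra. -/
noncomputable def PApp {A : Type*} [Ring A] [Algebra ℝ A] (h : ℕ) (a b : A) (k : ℕ) : A :=
  ∑ j ∈ Finset.range (k + 1), ((Ccoef h k j : ℝ)) • (a ^ (k - j) * b ^ j)

/-- Harmonic element `H_k = Σ_{j=0}^{k} T_j^k(2h+1) • a^{k−j} b^j` of a real algebra. -/
noncomputable def HApp {A : Type*} [Ring A] [Algebra ℝ A] (h : ℕ) (a b : A) (k : ℕ) : A :=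
  ∑ j ∈ Finset.range (k + 1), ((Tcoef h k j : ℝ)) • (a ^ (k - j) * b ^ j)

theorem poch_natCast (m k : ℕ) : poch (m : ℚ) k = k.factorial * m.multichoose k := by
  rw [poch, ← Nat.cast_ascFactorial, Nat.ascFactorial_eq_factorial_mul_choose',
    Nat.multichoose_eq, Nat.cast_mul]

theorem multichoose_pos {N : ℕ} (hN : N ≠ 0) (k : ℕ) : 0 < N.multichoose k := by
  rw [Nat.multichoose_eq]
  exact Nat.choose_pos (by lia)

theorem multichoose_mul_choose_mul_poch_div (m n : ℕ) {N j k : ℕ} (hN : N ≠ 0) (hj : j ≤ k) :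
    (N.multichoose k : ℚ) * ((k.choose j : ℚ) * poch m (k - j) * poch n j / poch N k) =
      m.multichoose (k - j) * n.multichoose j := by
  have hmulti : (N.multichoose k : ℚ) ≠ 0 := mod_cast (multichoose_pos hN k).ne'
  rw [poch_natCast, poch_natCast, poch_natCast, Nat.cast_choose ℚ hj]
  field_simp

/-- The coefficient of `tᵏ` in `(1 - a t)^(-m) (1 - b t)^(-n)`, that is, the complete homogeneous
symmetric polynomial of degree `k` in `m` copies of `a` and `n` copies of `b`. The
monomials are ordered, with the powers of `a` on the left of those of `b`. -/
def completeHomogeneous {A : Type*} [Semiring A] (m n : ℕ) (a b : A) (k : ℕ) : A :=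
  ∑ j ∈ Finset.range (k + 1), (m.multichoose (k - j) * n.multichoose j) • (a ^ (k - j) * b ^ j)

theorem completeHomogeneous_succ_succ {A : Type*} [Semiring A] (m n : ℕ) (a b : A) (k : ℕ) :
    completeHomogeneous (m + 1) n a b (k + 1) =
      completeHomogeneous m n a b (k + 1) + a * completeHomogeneous (m + 1) n a b k := by
  have pascal : ∀ j ∈ Finset.range (k + 1),
      ((m + 1).multichoose (k + 1 - j) * n.multichoose j) • (a ^ (k + 1 - j) * b ^ j) =
        (m.multichoose (k + 1 - j) * n.multichoose j) • (a ^ (k + 1 - j) * b ^ j) +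
          a * (((m + 1).multichoose (k - j) * n.multichoose j) • (a ^ (k - j) * b ^ j)) := by
    intro j hj
    rw [Nat.sub_add_comm (Finset.mem_range_succ_iff.mp hj), Nat.multichoose_succ_succ, add_mul,
      add_smul, mul_smul_comm, ← mul_assoc a, ← pow_succ']
  rw [completeHomogeneous, completeHomogeneous, completeHomogeneous,
    Finset.sum_range_succ _ (k + 1), Finset.sum_range_succ _ (k + 1), Finset.sum_congr rfl pascal,
    Finset.sum_add_distrib, ← Finset.mul_sum, add_right_comm]
  simp only [Nat.sub_self, Nat.multichoose_zero_right]

theorem multichoose_smul_sum_poch {K A : Type*} [DivisionRing K] [CharZero K] [Semiring A]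
    [Module K A] (m n : ℕ) {N : ℕ} (hN : N ≠ 0) (a b : A) (k : ℕ) :
    (N.multichoose k : K) • ∑ j ∈ Finset.range (k + 1),
        (((k.choose j : ℚ) * poch m (k - j) * poch n j / poch N k : ℚ) : K) •
          (a ^ (k - j) * b ^ j) =
      completeHomogeneous m n a b k := by
  rw [completeHomogeneous, Finset.smul_sum]
  refine Finset.sum_congr rfl fun j hj => ?_
  have hcoef :=
    multichoose_mul_choose_mul_poch_div m n hN (Finset.mem_range_succ_iff.mp hj)
  rw [smul_smul, ← Nat.cast_smul_eq_nsmul K]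
  congr 1
  exact_mod_cast congrArg (Rat.cast : ℚ → K) hcoef

section RealAlgebra

variable {A : Type*} [Ring A] [Algebra ℝ A]

theorem multichoose_smul_PApp (h : ℕ) (a b : A) (k : ℕ) :
    ((2 * h + 1).multichoose k : ℝ) • PApp h a b k = completeHomogeneous (h + 1) h a b k := by
  simpa [PApp, Ccoef] using
    multichoose_smul_sum_poch (K := ℝ) (h + 1) h (Nat.succ_ne_zero (2 * h)) a b k

theorem multichoose_smul_HApp {h : ℕ} (hh : h ≠ 0) (a b : A) (k : ℕ) :
    ((2 * h).multichoose k : ℝ) • HApp h a b k = completeHomogeneous h h a b k := by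
  simpa [HApp, Tcoef] using
    multichoose_smul_sum_poch (K := ℝ) h h (mul_ne_zero two_ne_zero hh) a b k

end RealAlgebra

theorem choose_add_left_eq_multichoose (n k : ℕ) :
    (k + n).choose k = (n + 1).multichoose k := by
  rw [Nat.multichoose_eq, add_right_comm, Nat.add_sub_cancel, add_comm]

theorem choose_add_sub_one_eq_multichoose {n : ℕ} (hn : n ≠ 0) (k : ℕ) :
    (k + n).choose (n - 1) = n.multichoose (k + 1) := by
  rw [Nat.multichoose_eq, ← add_assoc, Nat.add_sub_cancel, add_comm k]
  exact Nat.choose_symm_of_eq_add (by lia)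

theorem statement2_general {A : Type*} [Ring A] [Algebra ℝ A] (h : ℕ) (hh : 1 ≤ h)
    (a b : A) (l : ℕ) :
    (((l + 1 + 2 * h).choose (l + 1) : ℝ)) • PApp h a b (l + 1)
      - (((l + 2 * h).choose l : ℝ)) • (a * PApp h a b l)
      = (((l + 2 * h).choose (2 * h - 1) : ℝ)) • HApp h a b (l + 1) := by
  have h_ne_zero : h ≠ 0 := Nat.one_le_iff_ne_zero.mp hh
  rw [choose_add_left_eq_multichoose, choose_add_left_eq_multichoose,
    choose_add_sub_one_eq_multichoose (mul_ne_zero two_ne_zero h_ne_zero), ← mul_smul_comm,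
    multichoose_smul_PApp, multichoose_smul_PApp, multichoose_smul_HApp h_ne_zero,
    completeHomogeneous_succ_succ, add_sub_cancel_right]

/-- For commuting `a, b` in an associative unital real algebra `A` and `h ≥ 1`, `ℓ ≥ 0`:
`binom(ℓ+1+2h, ℓ+1)·P_{ℓ+1} − binom(ℓ+2h, ℓ)·a·P_ℓ = binom(ℓ+2h, 2h−1)·H_{ℓ+1}`. -/
theorem statement2 {A : Type*} [Ring A] [Algebra ℝ A] (h : ℕ) (hh : 1 ≤ h)
    (a b : A) (hab : a * b = b * a) (l : ℕ) :
    (((l + 1 + 2 * h).choose (l + 1) : ℝ)) • PApp h a b (l + 1)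
      - (((l + 2 * h).choose l : ℝ)) • (a * PApp h a b l)
      = (((l + 2 * h).choose (2 * h - 1) : ℝ)) • HApp h a b (l + 1) :=
  statement2_general h hh a b l
end

section
/- Let h ≥ 1 and ℓ be integers with 1 ≤ ℓ ≤ h, and let k be an integer with k ≥ 2ℓ−1. Then Σ_{α=0}^{h−ℓ} Σ_{β=0}^{α} binom(2h−2α+β−2ℓ+k, 2h−1) · binom(h−ℓ, α) · binom(α, β) · (−2)^β = k! / ((2ℓ−1)! · (k−2ℓ+1)!), as an identity of rational (or real) numbers. -/
/-! Expand `(1 + X) ^ k * X ^ (2 * m)` in powers of `Y = 1 + X`, using `X ^ 2 = -2 * Y + 1 + Y ^ 2`,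
and compare the coefficients of `X ^ (n + 2 * m)`: each power of `Y` contributes a binomial
coefficient, while the left side contributes `k.choose n`. -/

section Expansion

open Finset

theorem add_add_pow {R : Type*} [CommSemiring R] (x y z : R) (m : ℕ) :
    (x + y + z) ^ m = ∑ α ∈ range (m + 1), ∑ β ∈ range (α + 1),
      x ^ β * y ^ (α - β) * z ^ (m - α) * m.choose α * α.choose β := by
  simp only [add_pow _ z, add_pow x, sum_mul]
  exact sum_congr rfl fun α _ => sum_congr rfl fun β _ => by ring

theorem sub_one_pow_two_mul {R : Type*} [CommRing R] (y : R) (m : ℕ) :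
    (y - 1) ^ (2 * m) = ∑ α ∈ range (m + 1), ∑ β ∈ range (α + 1),
      y ^ (2 * (m - α) + β) * m.choose α * α.choose β * (-2) ^ β := by
  have square_eq : (y - 1) ^ 2 = -2 * y + 1 + y ^ 2 := by ring
  rw [pow_mul, square_eq, add_add_pow]
  refine sum_congr rfl fun α _ => sum_congr rfl fun β _ => ?_
  rw [mul_pow, one_pow, pow_add, pow_mul]
  ring

open Polynomial in
theorem statement5_general {R : Type*} [CommRing R] (m n k : ℕ) :
    ∑ α ∈ range (m + 1), ∑ β ∈ range (α + 1),
        ((2 * (m - α) + β + k).choose (n + 2 * m) : R)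
          * (m.choose α : R) * (α.choose β : R) * (-2 : R) ^ β
      = (k.choose n : R) := by
  have expansion : (1 + X : R[X]) ^ k * X ^ (2 * m) =
      ∑ α ∈ range (m + 1), ∑ β ∈ range (α + 1), (1 + X) ^ (2 * (m - α) + β + k)
        * C ((m.choose α : R) * (α.choose β : R) * (-2 : R) ^ β) := by
    have X_pow_eq := sub_one_pow_two_mul (1 + X : R[X]) m
    rw [add_sub_cancel_left] at X_pow_eq
    simp only [X_pow_eq, mul_sum]
    refine sum_congr rfl fun α _ => sum_congr rfl fun β _ => ?_
    simp only [C_mul, C_pow, C_neg, map_natCast, map_ofNat]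
    ring
  have coeff_eq := congrArg (coeff · (n + 2 * m)) expansion
  simpa only [coeff_mul_X_pow, finsetSum_coeff, coeff_mul_C, coeff_one_add_X_pow, ← mul_assoc]
    using coeff_eq.symm

end Expansion

/-- For integers `1 ≤ ℓ ≤ h` and `k ≥ 2ℓ−1`:
`Σ_{α=0}^{h−ℓ} Σ_{β=0}^{α} binom(2h−2α+β−2ℓ+k, 2h−1)·binom(h−ℓ,α)·binom(α,β)·(−2)^β
  = k!/((2ℓ−1)!·(k−2ℓ+1)!)`. -/
theorem statement5 (h l k : ℕ) (hl1 : 1 ≤ l) (hlh : l ≤ h) (hk : 2 * l - 1 ≤ k) :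
    ∑ α ∈ Finset.range (h - l + 1), ∑ β ∈ Finset.range (α + 1),
        ((2 * h - 2 * α + β - 2 * l + k).choose (2 * h - 1) : ℚ)
          * ((h - l).choose α : ℚ) * (α.choose β : ℚ) * (-2 : ℚ) ^ β
      = (k.factorial : ℚ) / (((2 * l - 1).factorial : ℚ) * ((k + 1 - 2 * l).factorial : ℚ)) := by
  rw [show k + 1 - 2 * l = k - (2 * l - 1) by omega, ← Nat.cast_choose ℚ hk,
    ← statement5_general (h - l)]
  refine Finset.sum_congr rfl fun α hα => Finset.sum_congr rfl fun β _ => ?_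
  rw [Finset.mem_range] at hα
  congr 5 <;> omega
end

section
/- Let h ≥ 2 and α be integers with 1 ≤ α ≤ h−1, and let k be an integer with k ≥ 2α. Then Σ_{ℓ=0}^{h−α} Σ_{ν=0}^{ℓ} binom(h−α, ℓ) · binom(ℓ, ν) · binom(k+2h−2α−2ℓ+ν, 2h) · (−2)^ν = k! / ((2α)! · (k−2α)!), as an identity of rational (or real) numbers. -/
/-!
If `E` is the shift by `1` on functions `ℕ → ℤ` and `Δ = E - 1`, then expanding
`Δ ^ (2 * m) = ((-2 * E + 1) + E ^ 2) ^ m` twice by the binomial theorem gives a double sum of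
shifts. For `m = h - α`, applied to `x ↦ x.choose (2 * h)` and evaluated at `k`, it is the sum in
the theorem. Each difference lowers the bottom index of a binomial coefficient by one, so the value
is `k.choose (2 * h - 2 * m) = k.choose (2 * α)`.
-/

open Finset in
theorem sub_one_pow_two_mul_eq_sum {R : Type*} [Ring R] (x : R) (m : ℕ) :
    (x - 1) ^ (2 * m) = ∑ l ∈ range (m + 1), ∑ ν ∈ range (l + 1),
      ((m.choose l : ℤ) * (l.choose ν : ℤ) * (-2) ^ ν) • x ^ (2 * (m - l) + ν) := by
  have sq_eq : (x - 1) ^ 2 = ((-2 : ℤ) • x + 1) + x ^ 2 := by noncomm_ring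
  have comm : Commute ((-2 : ℤ) • x + 1) (x ^ 2) :=
    (((Commute.refl x).smul_left _).add_left (.one_left x)).pow_right 2
  rw [pow_mul, sq_eq, comm.add_pow]
  refine sum_congr rfl fun l _ ↦ ?_
  rw [(Commute.one_right _).add_pow, sum_mul, sum_mul]
  refine sum_congr rfl fun ν _ ↦ ?_
  calc ((-2 : ℤ) • x) ^ ν * 1 ^ (l - ν) * (l.choose ν : R) * (x ^ 2) ^ (m - l) * (m.choose l : R)
      = (m.choose l : ℤ) • (l.choose ν : ℤ) • (-2 : ℤ) ^ ν • (x ^ ν * x ^ (2 * (m - l))) := by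
        simp only [smul_pow, one_pow, mul_one, ← nsmul_eq_mul', smul_mul_assoc, pow_mul,
          natCast_zsmul]
    _ = _ := by rw [smul_smul, smul_smul, ← pow_add, add_comm ν, mul_assoc]

open Finset fwdDiff_aux in
theorem fwdDiff_iter_two_mul_eq_sum_shift {M G : Type*} [AddCommMonoid M] [AddCommGroup G]
    (h : M) (f : M → G) (m : ℕ) (y : M) :
    (fwdDiff h)^[2 * m] f y = ∑ l ∈ range (m + 1), ∑ ν ∈ range (l + 1),
      ((m.choose l : ℤ) * (l.choose ν : ℤ) * (-2) ^ ν) • f (y + (2 * (m - l) + ν) • h) := by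
  have fwdDiff_eq_shift_sub_one : fwdDiffₗ M G h = shiftₗ M G h - 1 :=
    (add_sub_cancel_right _ _).symm
  rw [← coe_fwdDiffₗ_pow, fwdDiff_eq_shift_sub_one, sub_one_pow_two_mul_eq_sum]
  simp only [LinearMap.sum_apply, Finset.sum_apply, LinearMap.smul_apply, Pi.smul_apply,
    shiftₗ_pow_apply]

open Finset in
theorem statement6_general (R : Type*) [Ring R] (m j k : ℕ) :
    ∑ l ∈ range (m + 1), ∑ ν ∈ range (l + 1),
        (m.choose l : R) * (l.choose ν : R) * ((k + 2 * m - 2 * l + ν).choose (2 * m + j) : R)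
          * (-2 : R) ^ ν
      = (k.choose j : R) := by
  have choose_eq_sum := congr_fun (fwdDiff_iter_choose j (2 * m)) k
  rw [fwdDiff_iter_two_mul_eq_sum_shift] at choose_eq_sum
  rw [← Int.cast_natCast (k.choose j), ← choose_eq_sum, Int.cast_sum]
  refine sum_congr rfl fun l hl ↦ ?_
  rw [Int.cast_sum]
  refine sum_congr rfl fun ν _ ↦ ?_
  have shift_eq : k + 2 * m - 2 * l + ν = k + (2 * (m - l) + ν) • 1 := by grind
  rw [shift_eq, smul_eq_mul (α := ℤ), mul_right_comm (_ : ℤ)]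
  norm_cast

/-- For integers `2 ≤ h`, `1 ≤ α ≤ h−1` and `k ≥ 2α`:
`Σ_{ℓ=0}^{h−α} Σ_{ν=0}^{ℓ} binom(h−α,ℓ)·binom(ℓ,ν)·binom(k+2h−2α−2ℓ+ν, 2h)·(−2)^ν
  = k!/((2α)!·(k−2α)!)`. -/
theorem statement6 (h α k : ℕ) (hh : 2 ≤ h) (hα1 : 1 ≤ α) (hαh : α ≤ h - 1) (hk : 2 * α ≤ k) :
    ∑ l ∈ Finset.range (h - α + 1), ∑ ν ∈ Finset.range (l + 1),
        ((h - α).choose l : ℚ) * (l.choose ν : ℚ)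
          * ((k + 2 * h - 2 * α - 2 * l + ν).choose (2 * h) : ℚ) * (-2 : ℚ) ^ ν
      = (k.factorial : ℚ) / (((2 * α).factorial : ℚ) * ((k - 2 * α).factorial : ℚ)) := by
  rw [← Nat.cast_choose ℚ hk, ← statement6_general ℚ (h - α) (2 * α) k,
    show 2 * (h - α) + 2 * α = 2 * h by omega, show k + 2 * (h - α) = k + 2 * h - 2 * α by omega]
end

section
/- Let h ≥ 1 and ℓ be integers with 0 ≤ ℓ ≤ h−1, and let k be an integer with k ≥ 2h. Then Σ_{i=0}^{h−ℓ} (−1)^{i+h−ℓ} · binom(h−ℓ, i) · binom(k−i−ℓ+h, 2h) = (−1)^{h−ℓ} · ((h−ℓ)! · k! / ((k−h−ℓ)! · (2h)!)) · binom(2h, h−ℓ), as an identity of rational (or real) numbers. -/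
/-!
Reversing the order of summation turns the sum into `(-1) ^ (h - l)` times the `(h - l)`-th iterated
forward difference of `x ↦ x.choose (2 * h)` at `x = k`. Each forward difference lowers the lower
index by one (Pascal's rule), so what is left is `k.choose (h + l)`.
-/

open Finset fwdDiff

theorem fwdDiff_iter_eq_sum_shift_reflect {M G : Type*} [AddCommMonoid M] [AddCommGroup G]
    (a : M) (f : M → G) (n : ℕ) (y : M) :
    Δ_[a] ^[n] f y = ∑ i ∈ range (n + 1), ((-1 : ℤ) ^ i * n.choose i) • f (y + (n - i) • a) := by
  rw [fwdDiff_iter_eq_sum_shift, ← sum_range_reflect]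
  refine sum_congr rfl fun i hi ↦ ?_
  have hin : i ≤ n := mem_range_succ_iff.mp hi
  rw [Nat.add_sub_cancel, Nat.sub_sub_self hin, Nat.choose_symm hin]

theorem sum_range_neg_one_pow_mul_choose_mul_choose (R : Type*) [Ring R] (m n r : ℕ) :
    ∑ i ∈ range (m + 1), (-1 : R) ^ i * m.choose i * (n + (m - i)).choose (m + r) =
      n.choose r := by
  have hdiff := congrFun (fwdDiff_iter_choose r m) n
  rw [fwdDiff_iter_eq_sum_shift_reflect] at hdiff
  simpa using congrArg (Int.cast : ℤ → R) hdiff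

theorem cast_choose_eq_factorial_div_mul_choose (K : Type*) [Field K] [CharZero K] (m : ℕ)
    {n r : ℕ} (hrn : r ≤ n) :
    (n.choose r : K) =
      (m.factorial * n.factorial / ((n - r).factorial * (m + r).factorial)) *
        (m + r).choose m := by
  rw [Nat.cast_choose K hrn, Nat.cast_add_choose]
  field_simp [Nat.factorial_ne_zero]

theorem statement7_general (K : Type*) [Field K] [CharZero K] {h l k : ℕ} (hl : l ≤ h)
    (hk : h + l ≤ k) :
    ∑ i ∈ range (h - l + 1),
        (-1 : K) ^ (i + h - l) * (h - l).choose i * (k - i - l + h).choose (2 * h) =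
      (-1 : K) ^ (h - l) *
        ((h - l).factorial * k.factorial / ((k - h - l).factorial * (2 * h).factorial)) *
        (2 * h).choose (h - l) := by
  have two_mul_h : 2 * h = (h - l) + (h + l) := by lia
  calc
    _ = ∑ i ∈ range (h - l + 1), (-1 : K) ^ (h - l) *
          ((-1) ^ i * (h - l).choose i * (k + (h - l - i)).choose ((h - l) + (h + l))) := by
      refine sum_congr rfl fun i hi ↦ ?_
      have hil : i ≤ h - l := mem_range_succ_iff.mp hi
      rw [show i + h - l = (h - l) + i by lia, show k - i - l + h = k + (h - l - i) by lia,
        ← two_mul_h, pow_add]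
      ring
    _ = (-1) ^ (h - l) * k.choose (h + l) := by
      rw [← mul_sum, sum_range_neg_one_pow_mul_choose_mul_choose]
    _ = _ := by
      rw [cast_choose_eq_factorial_div_mul_choose K (h - l) hk, ← two_mul_h, Nat.sub_sub, mul_assoc]

/-- For integers `1 ≤ h`, `0 ≤ ℓ ≤ h−1` and `k ≥ 2h`:
`Σ_{i=0}^{h−ℓ} (−1)^{i+h−ℓ}·binom(h−ℓ,i)·binom(k−i−ℓ+h, 2h)
  = (−1)^{h−ℓ}·((h−ℓ)!·k!/((k−h−ℓ)!·(2h)!))·binom(2h, h−ℓ)`. -/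
theorem statement7 (h l k : ℕ) (hh : 1 ≤ h) (hl : l ≤ h - 1) (hk : 2 * h ≤ k) :
    ∑ i ∈ Finset.range (h - l + 1),
        (-1 : ℚ) ^ (i + h - l) * ((h - l).choose i : ℚ) * ((k - i - l + h).choose (2 * h) : ℚ)
      = (-1 : ℚ) ^ (h - l)
          * (((h - l).factorial : ℚ) * (k.factorial : ℚ)
              / (((k - h - l).factorial : ℚ) * ((2 * h).factorial : ℚ)))
          * ((2 * h).choose (h - l) : ℚ) := by
  exact statement7_general ℚ (by lia) (by lia)
end

section
/- Let s, x ∈ ℍ with Q_{c,s}(x) := s² − 2(re x)·s + ‖x‖² ≠ 0, and let m ∈ ℕ. Define F : ℍ → ℍ by F(y) = (s − ȳ) · (s² − 2(re y)·s + ‖y‖²)^{−m}. Then F is (real) differentiable at x and (D F)(x) := ∂₀F(x) + i·∂₁F(x) + j·∂₂F(x) + k·∂₃F(x) = 2(m − 2) · Q_{c,s}(x)^{−m}. -/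
open Quaternion

/-- The basis quaternion `i`. -/
def qi : ℍ[ℝ] := ⟨0, 1, 0, 0⟩
/-- The basis quaternion `j`. -/
def qj : ℍ[ℝ] := ⟨0, 0, 1, 0⟩
/-- The basis quaternion `k`. -/
def qk : ℍ[ℝ] := ⟨0, 0, 0, 1⟩

/-- The Cauchy–Fueter (Dirac) operator
`(D F)(x) = ∂₀F(x) + i·∂₁F(x) + j·∂₂F(x) + k·∂₃F(x)`, where `∂_μF(x)` is the real Fréchet
derivative of `F` at `x` applied to the basis quaternion `e_μ`. -/
noncomputable def Dirac (F : ℍ[ℝ] → ℍ[ℝ]) (x : ℍ[ℝ]) : ℍ[ℝ] :=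
  fderiv ℝ F x 1 + qi * fderiv ℝ F x qi + qj * fderiv ℝ F x qj + qk * fderiv ℝ F x qk

/-- The commutative pseudo-Cauchy kernel `Q_{c,s}(y) = s² − 2(re y)·s + ‖y‖²`. -/
noncomputable def Qcs (s y : ℍ[ℝ]) : ℍ[ℝ] :=
  s ^ 2 - 2 * ((y.re : ℝ) : ℍ[ℝ]) * s + ((‖y‖ ^ 2 : ℝ) : ℍ[ℝ])

/-! The differential of `Q_{c,s}` at `x` is `v ↦ 2⟪x, v⟫ - 2⟪1, v⟫ s`, whose values commute with
`Q_{c,s}(x)`; hence `Q_{c,s}ⁿ` obeys the commutative power rule. The Dirac operator only sees the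
differential, is right `ℍ`-linear in it, and sends `v ↦ ⟪q, v⟫ a` to `q a`. Applied to the product
rule for `(s - ȳ) Q_{c,s}ⁿ`, this gives
`n (2x(s - x̄) - 2(s - x̄)s) Q_{c,s}ⁿ⁻¹ - 4 Q_{c,s}ⁿ = -2(n + 2) Q_{c,s}ⁿ`,
because `(s - x̄)s - x(s - x̄) = s² - (x + x̄)s + x x̄ = Q_{c,s}(x)`. -/

open scoped RightActions InnerProductSpace

section PowerRule

variable {𝕜 E R : Type*} [NontriviallyNormedField 𝕜] [NormedAddCommGroup E] [NormedSpace 𝕜 E]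
  {x : E}

theorem hasFDerivAt_pow_of_commute [NormedRing R] [NormedAlgebra 𝕜 R] {f : E → R}
    {f' : E →L[𝕜] R} (hf : HasFDerivAt f f' x) (hcomm : ∀ v, Commute (f x) (f' v)) (n : ℕ) :
    HasFDerivAt (fun y => f y ^ n) (n • (f' <• f x ^ (n - 1))) x := by
  have hterm (i) (hi : i ∈ Finset.range n) :
      f x ^ (n.pred - i) •> f' <• f x ^ i = f' <• f x ^ (n - 1) := by
    ext v
    have hexp : n.pred - i + i = n - 1 :=
      Nat.sub_add_cancel (Nat.le_pred_of_lt (Finset.mem_range.1 hi))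
    simp only [smul_apply, op_smul_eq_mul, smul_eq_mul]
    rw [((hcomm v).pow_left _).eq, mul_assoc, ← pow_add, hexp]
  refine (hf.fun_pow' n).congr_fderiv ?_
  rw [Finset.sum_congr rfl hterm, Finset.sum_const, Finset.card_range]

variable [NormedDivisionRing R] [NormedAlgebra 𝕜 R] {f : E → R} {f' : E →L[𝕜] R}

theorem hasFDerivAt_inv_of_commute (hf : HasFDerivAt f f' x)
    (hcomm : ∀ v, Commute (f x) (f' v)) (hx : f x ≠ 0) :
    HasFDerivAt (fun y => (f y)⁻¹) (-(f' <• (f x)⁻¹ ^ 2)) x := by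
  refine ((hasFDerivAt_inv' (𝕜 := 𝕜) hx).comp x hf).congr_fderiv ?_
  ext v
  simp only [ContinuousLinearMap.comp_apply, neg_apply, ContinuousLinearMap.mulLeftRight_apply,
    smul_apply, op_smul_eq_mul, (hcomm v).inv_left₀.eq, mul_assoc, sq]

theorem hasFDerivAt_zpow_of_commute (hf : HasFDerivAt f f' x)
    (hcomm : ∀ v, Commute (f x) (f' v)) {n : ℤ} (hn : f x ≠ 0 ∨ 0 ≤ n) :
    HasFDerivAt (fun y => f y ^ n) (n • (f' <• f x ^ (n - 1))) x := by
  rcases n with (_ | k) | k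
  · simpa using hasFDerivAt_const (1 : R) x
  · have hpow := hasFDerivAt_pow_of_commute hf hcomm (k + 1)
    rw [Nat.add_sub_cancel, ← natCast_zsmul] at hpow
    rw [Int.ofNat_eq_natCast, Nat.cast_succ, add_sub_cancel_right]
    exact_mod_cast hpow
  · have hx : f x ≠ 0 := hn.resolve_right (by simp)
    have hcomm_inv (v) : Commute (f x)⁻¹ ((-(f' <• (f x)⁻¹ ^ 2)) v) :=
      ((hcomm v).inv_left₀.mul_right (Commute.self_pow _ 2)).neg_right
    have hpow := hasFDerivAt_pow_of_commute
      (hasFDerivAt_inv_of_commute hf hcomm hx) hcomm_inv (k + 1)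
    have hexp : (f x)⁻¹ ^ 2 * (f x)⁻¹ ^ k = f x ^ (Int.negSucc k - 1) := by
      rw [← pow_add, inv_pow, ← zpow_natCast, ← zpow_neg]
      congr 1
      lia
    simp only [zpow_negSucc, ← inv_pow]
    refine hpow.congr_fderiv ?_
    rw [Nat.add_sub_cancel, smul_neg, smul_neg, smul_smul, ← MulOpposite.op_mul, hexp,
      negSucc_zsmul]

end PowerRule

theorem zsmul_mul_zpow_sub_one {K : Type*} [DivisionRing K] (a : K) (n : ℤ) :
    n • (a * a ^ (n - 1)) = n • a ^ n := by
  rcases eq_or_ne n 0 with rfl | hn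
  · simp only [zero_smul]
  · have hexp : 1 + (n - 1) = n := add_sub_cancel 1 n
    have hadd : a ^ (1 + (n - 1)) = a ^ (1 : ℤ) * a ^ (n - 1) :=
      zpow_add' (.inr (.inl (by rwa [hexp])))
    rw [← hexp, hadd, zpow_one, hexp]

theorem inner_one_left_eq_re (q : ℍ[ℝ]) : ⟪1, q⟫_ℝ = q.re := by
  simp [Quaternion.inner_def]

theorem qi_components : qi.re = 0 ∧ qi.imI = 1 ∧ qi.imJ = 0 ∧ qi.imK = 0 :=
  ⟨rfl, rfl, rfl, rfl⟩

theorem qj_components : qj.re = 0 ∧ qj.imI = 0 ∧ qj.imJ = 1 ∧ qj.imK = 0 :=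
  ⟨rfl, rfl, rfl, rfl⟩

theorem qk_components : qk.re = 0 ∧ qk.imI = 0 ∧ qk.imJ = 0 ∧ qk.imK = 1 :=
  ⟨rfl, rfl, rfl, rfl⟩

theorem qi_mul_qi : qi * qi = -1 := by
  ext <;> simp [qi_components]

theorem qj_mul_qj : qj * qj = -1 := by
  ext <;> simp [qj_components]

theorem qk_mul_qk : qk * qk = -1 := by
  ext <;> simp [qk_components]

/-- The principal symbol of the Cauchy–Fueter operator: the map sending the real differential of
`F` at `x` to `(D F)(x)`. The action of `ℍᵐᵒᵖ` encodes right multiplication, with which the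
operator commutes because its coefficients act from the left. -/
noncomputable def diracSymbol : (ℍ[ℝ] →L[ℝ] ℍ[ℝ]) →ₗ[ℍ[ℝ]ᵐᵒᵖ] ℍ[ℝ] where
  toFun L := L 1 + qi * L qi + qj * L qj + qk * L qk
  map_add' L M := by simp only [add_apply, mul_add]; abel
  map_smul' a L := by
    simp only [smul_apply, MulOpposite.smul_eq_mul_unop, RingHom.id_apply, add_mul, mul_assoc]

theorem dirac_eq_diracSymbol {F : ℍ[ℝ] → ℍ[ℝ]} {F' : ℍ[ℝ] →L[ℝ] ℍ[ℝ]} {x : ℍ[ℝ]}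
    (hF : HasFDerivAt F F' x) : Dirac F x = diracSymbol F' := by
  rw [← hF.fderiv]
  rfl

theorem diracSymbol_op_smul (L : ℍ[ℝ] →L[ℝ] ℍ[ℝ]) (a : ℍ[ℝ]) :
    diracSymbol (L <• a) = diracSymbol L * a :=
  map_smul diracSymbol (MulOpposite.op a) L

theorem sum_inner_smul_basis (q : ℍ[ℝ]) :
    ⟪q, 1⟫_ℝ • 1 + ⟪q, qi⟫_ℝ • qi + ⟪q, qj⟫_ℝ • qj + ⟪q, qk⟫_ℝ • qk = q := by
  ext <;> simp [Quaternion.inner_def, qi_components, qj_components, qk_components]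

theorem diracSymbol_innerSL_smulRight (q a : ℍ[ℝ]) :
    diracSymbol ((innerSL ℝ q).smulRight a) = q * a := by
  conv_rhs => rw [← sum_inner_smul_basis q]
  simp [diracSymbol, add_mul]

theorem diracSymbol_id : diracSymbol (.id ℝ ℍ[ℝ]) = -2 := by
  change 1 + qi * qi + qj * qj + qk * qk = -2
  rw [qi_mul_qi, qj_mul_qj, qk_mul_qk]
  norm_num

/-- Quaternionic conjugation as a real-linear map, written as `q ↦ 2⟪1, q⟫ - q` so that its
symbol can be read off from those of `v ↦ ⟪q, v⟫ a` and of the identity. -/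
noncomputable def conjCLM : ℍ[ℝ] →L[ℝ] ℍ[ℝ] :=
  (innerSL ℝ 1).smulRight 2 - .id ℝ ℍ[ℝ]

theorem conjCLM_apply (q : ℍ[ℝ]) : conjCLM q = star q := by
  change ⟪1, q⟫_ℝ • (2 : ℍ[ℝ]) - q = star q
  rw [inner_one_left_eq_re, ← Quaternion.coe_mul_eq_smul, ← Commute.ofNat_left 2 (q.re : ℍ[ℝ]),
    ← Quaternion.star_add_self, add_sub_cancel_right]

theorem diracSymbol_conjCLM : diracSymbol conjCLM = 4 := by
  rw [conjCLM, map_sub, diracSymbol_innerSL_smulRight, diracSymbol_id]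
  norm_num

/-- The real differential of `Q_{c,s}` at `x`, with `re v` written as `⟪1, v⟫`. -/
noncomputable def QcsDeriv (s x : ℍ[ℝ]) : ℍ[ℝ] →L[ℝ] ℍ[ℝ] :=
  (innerSL ℝ x).smulRight 2 - (innerSL ℝ 1).smulRight (2 * s)

theorem Qcs_eq_star (s x : ℍ[ℝ]) : Qcs s x = s ^ 2 - (x + star x) * s + x * star x := by
  rw [Qcs, Quaternion.self_add_star, Quaternion.self_mul_star, Quaternion.normSq_eq_norm_mul_self,
    ← sq]

theorem Qcs_eq_inner (s x : ℍ[ℝ]) : Qcs s x = s ^ 2 - ⟪1, x⟫_ℝ • (2 * s) + ‖x‖ ^ 2 • 1 := by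
  rw [Qcs, inner_one_left_eq_re, ← Quaternion.coe_mul_eq_smul, ← Quaternion.coe_mul_eq_smul,
    mul_one, ← mul_assoc, Quaternion.coe_commutes]

theorem hasFDerivAt_Qcs (s x : ℍ[ℝ]) : HasFDerivAt (Qcs s) (QcsDeriv s x) x := by
  have hre : HasFDerivAt (fun y => ⟪1, y⟫_ℝ • (2 * s)) ((innerSL ℝ 1).smulRight (2 * s)) x :=
    ((innerSL ℝ 1).smulRight (2 * s)).hasFDerivAt
  have hnorm : HasFDerivAt (fun y : ℍ[ℝ] => ‖y‖ ^ 2 • (1 : ℍ[ℝ])) ((innerSL ℝ x).smulRight 2)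
      x := by
    refine ((hasStrictFDerivAt_norm_sq x).hasFDerivAt.smul_const (1 : ℍ[ℝ])).congr_fderiv ?_
    ext1 v
    simp [two_smul, ← one_add_one_eq_two (R := ℍ[ℝ]), smul_add, add_smul]
  have hQ := (hre.const_sub (s ^ 2)).add hnorm
  rw [neg_add_eq_sub] at hQ
  exact hQ.congr_of_eventuallyEq (.of_forall (Qcs_eq_inner s))

theorem commute_Qcs_self (s x : ℍ[ℝ]) : Commute (Qcs s x) s := by
  have hre : Commute (2 * (x.re : ℍ[ℝ])) s :=
    (Commute.ofNat_left 2 s).mul_left (Quaternion.coe_commute _ _)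
  exact (((Commute.refl s).pow_left 2).sub_left (hre.mul_left (.refl s))).add_left
    (Quaternion.coe_commute _ _)

theorem commute_Qcs_QcsDeriv (s x v : ℍ[ℝ]) : Commute (Qcs s x) (QcsDeriv s x v) := by
  have htwo : Commute (Qcs s x) 2 := .ofNat_right _ 2
  exact (htwo.smul_right _).sub_right ((htwo.mul_right (commute_Qcs_self s x)).smul_right _)

theorem diracSymbol_smul_QcsDeriv (s x : ℍ[ℝ]) :
    diracSymbol ((s - star x) •> QcsDeriv s x) = -2 * Qcs s x := by
  have hsplit : (s - star x) •> QcsDeriv s x = (innerSL ℝ x).smulRight (2 * (s - star x))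
      - (innerSL ℝ 1).smulRight (2 * ((s - star x) * s)) := by
    ext1 v
    change (s - star x) * (⟪x, v⟫_ℝ • 2 - ⟪1, v⟫_ℝ • (2 * s))
      = ⟪x, v⟫_ℝ • (2 * (s - star x)) - ⟪1, v⟫_ℝ • (2 * ((s - star x) * s))
    rw [mul_sub, mul_smul_comm, mul_smul_comm, ← mul_assoc, (Commute.ofNat_right _ 2).eq, mul_assoc]
  rw [hsplit, map_sub, diracSymbol_innerSL_smulRight, diracSymbol_innerSL_smulRight, Qcs_eq_star]
  noncomm_ring

theorem statement10_general (s x : ℍ[ℝ]) (n : ℤ) (hn : Qcs s x ≠ 0 ∨ 0 ≤ n) :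
    DifferentiableAt ℝ (fun y => (s - star y) * Qcs s y ^ n) x ∧
    Dirac (fun y => (s - star y) * Qcs s y ^ n) x
      = ((-2 * ((n : ℝ) + 2) : ℝ) : ℍ[ℝ]) * Qcs s x ^ n := by
  have hcomm : ∀ v, Commute (Qcs s x) (QcsDeriv s x v) := commute_Qcs_QcsDeriv s x
  have hconj : HasFDerivAt (fun y => s - star y) (-conjCLM) x := by
    simpa only [conjCLM_apply] using conjCLM.hasFDerivAt.const_sub s
  have hF : HasFDerivAt (fun y => (s - star y) * Qcs s y ^ n)
      ((s - star x) •> (n • (QcsDeriv s x <• Qcs s x ^ (n - 1))) + (-conjCLM) <• Qcs s x ^ n) x :=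
    hconj.mul' (hasFDerivAt_zpow_of_commute (hasFDerivAt_Qcs s x) hcomm hn)
  refine ⟨hF.differentiableAt, ?_⟩
  calc Dirac (fun y => (s - star y) * Qcs s y ^ n) x
      = n • (diracSymbol ((s - star x) •> QcsDeriv s x) * Qcs s x ^ (n - 1))
          - diracSymbol conjCLM * Qcs s x ^ n := by
        rw [dirac_eq_diracSymbol hF, smul_comm _ n, smul_comm (s - star x), map_add, map_zsmul,
          diracSymbol_op_smul, diracSymbol_op_smul, map_neg, neg_mul, ← sub_eq_add_neg]
    _ = -2 * (n • (Qcs s x * Qcs s x ^ (n - 1))) - 4 * Qcs s x ^ n := by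
        rw [diracSymbol_smul_QcsDeriv, diracSymbol_conjCLM, mul_assoc, mul_smul_comm]
    _ = ((-2 * ((n : ℝ) + 2) : ℝ) : ℍ[ℝ]) * Qcs s x ^ n := by
        have hcoeff : ((-2 * ((n : ℝ) + 2) : ℝ) : ℍ[ℝ]) = -2 * n - 4 := by
          exact_mod_cast congrArg Quaternion.coe (by ring : -2 * ((n : ℝ) + 2) = -2 * n - 4)
        rw [zsmul_mul_zpow_sub_one, zsmul_eq_mul, ← mul_assoc, ← sub_mul, hcoeff]

/-- For `Q_{c,s}(x) ≠ 0` and `m ∈ ℕ`, the map `F(y) = (s − ȳ)·Q_{c,s}(y)^{−m}` is real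
differentiable at `x` and `(D F)(x) = 2(m − 2)·Q_{c,s}(x)^{−m}`. -/
theorem statement10 (s x : ℍ[ℝ]) (hQ : Qcs s x ≠ 0) (m : ℕ) :
    DifferentiableAt ℝ (fun y => (s - star y) * Qcs s y ^ (-(m : ℤ))) x ∧
    Dirac (fun y => (s - star y) * Qcs s y ^ (-(m : ℤ))) x
      = ((2 * ((m : ℝ) - 2) : ℝ) : ℍ[ℝ]) * Qcs s x ^ (-(m : ℤ)) := by
  have hcoeff : 2 * ((m : ℝ) - 2) = -2 * (((-(m : ℤ) : ℤ) : ℝ) + 2) := by push_cast; ring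
  exact hcoeff ▸ statement10_general s x (-m) (.inl hQ)
end

section
/- For every m ∈ ℕ and every quaternion x ∈ ℍ, the power functions p_m : ℍ → ℍ, p_m(y) = y^m, satisfy (Δ p_{m+1})(x) − x · (Δ p_m)(x) = 2 · (D p_m)(x), where D p_m = ∂₀p_m + i·∂₁p_m + j·∂₂p_m + k·∂₃p_m is the Cauchy–Fueter operator applied to p_m and Δ p = Σ_{μ=0}^{3} ∂_μ(∂_μ p) is the Laplacian. -/
open Quaternion

/-- The Laplacian `(Δ F)(x) = Σ_{μ=0}^{3} ∂_μ(∂_μ F)(x)`. -/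
noncomputable def lap (F : ℍ[ℝ] → ℍ[ℝ]) (x : ℍ[ℝ]) : ℍ[ℝ] :=
  fderiv ℝ (fun y => fderiv ℝ F y 1) x 1
    + fderiv ℝ (fun y => fderiv ℝ F y qi) x qi
    + fderiv ℝ (fun y => fderiv ℝ F y qj) x qj
    + fderiv ℝ (fun y => fderiv ℝ F y qk) x qk

open scoped Topology

section Leibniz

variable {𝕜 A : Type*} [NontriviallyNormedField 𝕜] [NormedRing A] [NormedAlgebra 𝕜 A]
  {G : A → A} {x : A}

theorem fderiv_id_mul_apply (hG : DifferentiableAt 𝕜 G x) (v : A) :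
    fderiv 𝕜 (fun y => y * G y) x v = v * G x + x * fderiv 𝕜 G x v := by
  simp [fderiv_fun_mul' differentiableAt_fun_id hG, add_comm]

theorem fderiv_fderiv_id_mul_apply (hG : ContDiffAt 𝕜 2 G x) (v w : A) :
    fderiv 𝕜 (fun y => fderiv 𝕜 (fun z => z * G z) y v) x w
      = v * fderiv 𝕜 G x w + w * fderiv 𝕜 G x v
        + x * fderiv 𝕜 (fun y => fderiv 𝕜 G y v) x w := by
  have hG_diff : DifferentiableAt 𝕜 G x := hG.differentiableAt two_ne_zero
  have hG_deriv : DifferentiableAt 𝕜 (fun y => fderiv 𝕜 G y v) x :=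
    ((hG.fderiv_right (m := 1) one_add_one_eq_two.le).differentiableAt one_ne_zero).clm_apply
      (differentiableAt_const v)
  have first_order : (fun y => fderiv 𝕜 (fun z => z * G z) y v)
      =ᶠ[𝓝 x] fun y => v * G y + y * fderiv 𝕜 G y v := by
    filter_upwards [hG.eventually (by simp)] with y hy
    exact fderiv_id_mul_apply (hy.differentiableAt two_ne_zero) v
  calc
    fderiv 𝕜 (fun y => fderiv 𝕜 (fun z => z * G z) y v) x w
      = fderiv 𝕜 (fun y => v * G y + y * fderiv 𝕜 G y v) x w := by rw [first_order.fderiv_eq]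
    _ = v * fderiv 𝕜 G x w + fderiv 𝕜 (fun y => y * fderiv 𝕜 G y v) x w := by
      rw [fderiv_fun_add (hG_diff.const_mul v) (differentiableAt_fun_id.fun_mul hG_deriv),
        fderiv_const_mul hG_diff, add_apply, smul_apply, smul_eq_mul]
    _ = v * fderiv 𝕜 G x w + w * fderiv 𝕜 G x v
        + x * fderiv 𝕜 (fun y => fderiv 𝕜 G y v) x w := by
      rw [fderiv_id_mul_apply hG_deriv, add_assoc]

end Leibniz

theorem statement14_general {G : ℍ[ℝ] → ℍ[ℝ]} {x : ℍ[ℝ]} (hG : ContDiffAt ℝ 2 G x) :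
    lap (fun y => y * G y) x - x * lap G x = 2 * Dirac G x := by
  -- The cross terms `e_μ * ∂_μ G + e_μ * ∂_μ G` of the Leibniz rule assemble to `2 * Dirac G`.
  simp only [lap, Dirac, fderiv_fderiv_id_mul_apply hG, one_mul, mul_add, two_mul]
  abel

/-- For every `m ∈ ℕ` and `x ∈ ℍ`, the power functions `p_m(y) = y^m` satisfy
`(Δ p_{m+1})(x) − x·(Δ p_m)(x) = 2·(D p_m)(x)`. -/
theorem statement14 (m : ℕ) (x : ℍ[ℝ]) :
    lap (fun y => y ^ (m + 1)) x - x * lap (fun y => y ^ m) x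
      = 2 * Dirac (fun y => y ^ m) x := by
  simpa only [pow_succ'] using statement14_general (contDiffAt_fun_id.pow m)
end
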